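/- Let k ≥ 1 and n ≥ 1 be integers, let (m₁,…,mₙ) be a tuple of nonnegative integers, and let N be a complex number. Then (1/((2πi)^{k}·k!)) ∮_{|w₁|=1}⋯∮_{|w_k|=1} ( e^{N(w₁+⋯+w_k)} / ∏_{i=1}^{k} w_i^{2k} ) · Δ²(w) · ( Σ_{l=1}^{k} 1/w_l − N )^{m₁} · ∏_{j=2}^{n} ( Σ_{l=1}^{k} 1/w_l^{j} )^{m_j} dw₁⋯dw_k = N^{k²+Σ_{s=1}^{n} s·m_s} · Σ (−1)^{m₁₀} · C(m₁; m₁₀,m₁₁,…,m₁ₖ) · ( ∏_{s=2}^{n} C(m_s; m_{s1},…,m_{sk}) ) · ( ∏_{i=1}^{k} 1/(2k + Σ_{s=1}^{n} s·m_{si} − i)! ) · ∏_{1≤i<j≤k} ( Σ_{s=1}^{n} s·m_{sj} − Σ_{s=1}^{n} s·m_{si} − j + i ), where the sum is over all nonnegative integers m₁₀, m₁₁,…,m₁ₖ with m₁₀+m₁₁+⋯+m₁ₖ = m₁ and, for each s = 2,…,n, all nonnegative integers m_{s1},…,m_{sk} with m_{s1}+⋯+m_{sk} = m_s. -/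

import Mathlib

open Finset

noncomputable section

/-- The iterated contour integral `∮_{|w₁|=1} ⋯ ∮_{|w_n|=1} f(w₁,…,w_n) dw_n ⋯ dw₁`,
each circle positively oriented. -/
def multiCircle : (n : ℕ) → ((Fin n → ℂ) → ℂ) → ℂ
  | 0, f => f ![]
  | n + 1, f => circleIntegral (fun w => multiCircle n (fun v => f (Fin.cons w v))) 0 1

lemma mc_sum_prod {α : Type*} (S : Finset α) (k : ℕ) : ∀ (c : α → ℂ) (f : α → Fin k → ℂ → ℂ)
    (_ : ∀ a i, ContinuousOn (f a i) (Metric.sphere 0 1)),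
    multiCircle k (fun w => ∑ a ∈ S, c a * ∏ i, f a i (w i)) =
      ∑ a ∈ S, c a * ∏ i, circleIntegral (f a i) 0 1 := by
  induction k with
  | zero => intro c f _; simp [multiCircle]
  | succ k ih =>
    intro c f hf
    have h1 : ∀ w : ℂ, multiCircle k (fun v => ∑ a ∈ S, c a *
        ∏ i, f a i ((Fin.cons w v : Fin (k+1) → ℂ) i)) =
        ∑ a ∈ S, (c a * ∏ i : Fin k, circleIntegral (f a i.succ) 0 1) * f a 0 w := by
      intro w
      have := ih (fun a => c a * f a 0 w) (fun a i => f a i.succ) (fun a i => hf a i.succ)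
      simp only [Fin.prod_univ_succ, Fin.cons_zero, Fin.cons_succ]
      simp only [← mul_assoc]
      rw [this]
      exact Finset.sum_congr rfl fun a _ => by ring
    simp only [multiCircle, h1]
    rw [circleIntegral.integral_fun_sum]
    · refine Finset.sum_congr rfl fun a _ => ?_
      rw [circleIntegral.integral_const_mul, Fin.prod_univ_succ]
      ring
    · intro a _
      exact (continuousOn_const.mul (hf a 0)).circleIntegrable zero_le_one

lemma mc_symm {α : Type*} (S : Finset α) (k : ℕ) (c : α → ℂ) (f : α → Fin k → ℂ → ℂ)
    (hf : ∀ a i, ContinuousOn (f a i) (Metric.sphere 0 1)) (Φ : (Fin k → ℂ) → ℂ)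
    (hΦ : ∀ (σ : Equiv.Perm (Fin k)) w, Φ (w ∘ σ) = Φ w)
    (h : ∀ w, Φ w * (Matrix.vandermonde w).det * ∏ i, w i ^ (i : ℕ) =
      ∑ a ∈ S, c a * ∏ i, f a i (w i)) :
    multiCircle k (fun w => Φ w * (Matrix.vandermonde w).det ^ 2) =
      (k.factorial : ℂ) * ∑ a ∈ S, c a * ∏ i, circleIntegral (f a i) 0 1 := by
  have h1 : ∀ w, Φ w * (Matrix.vandermonde w).det ^ 2 =
      ∑ b ∈ (Finset.univ : Finset (Equiv.Perm (Fin k))) ×ˢ S,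
        c b.2 * ∏ i, f b.2 (b.1 i) (w i) := by
    intro w
    rw [Finset.sum_product, sq, ← mul_assoc]
    have hdet := Matrix.det_apply' (Matrix.vandermonde w).transpose
    rw [Matrix.det_transpose] at hdet
    conv_lhs => arg 2; rw [hdet]
    rw [Finset.mul_sum]
    refine Finset.sum_congr rfl fun σ _ => ?_
    have e := h (w ∘ σ.symm)
    rw [hΦ σ.symm] at e
    have e2 : (Matrix.vandermonde (w ∘ σ.symm)).det =
        (Equiv.Perm.sign σ : ℂ) * (Matrix.vandermonde w).det := by
      have := Matrix.det_permute σ.symm (Matrix.vandermonde w)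
      rw [Equiv.Perm.sign_symm] at this
      rw [← this]; rfl
    have e3 : ∏ i, (w ∘ σ.symm) i ^ (i : ℕ) = ∏ i, w i ^ (σ i : ℕ) := by
      rw [← Equiv.prod_comp σ]; simp
    have e4 : ∀ a, ∏ i, f a i ((w ∘ σ.symm) i) = ∏ i, f a (σ i) (w i) := by
      intro a
      rw [← Equiv.prod_comp σ]; simp
    simp only [e2, e3, e4] at e
    rw [← e]
    simp only [Matrix.transpose_apply, Matrix.vandermonde_apply]
    ring
  simp only [h1]
  rw [mc_sum_prod _ _ (fun b : Equiv.Perm (Fin k) × α => c b.2) (fun b i => f b.2 (b.1 i))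
    (fun b i => hf _ _), Finset.sum_product]
  have : ∀ (σ : Equiv.Perm (Fin k)) a, ∏ i, circleIntegral (f a (σ i)) 0 1
      = ∏ i, circleIntegral (f a i) 0 1 := fun σ a =>
    Equiv.prod_comp σ (fun i => circleIntegral (f a i) 0 1)
  simp only [this]
  simp [Fintype.card_perm]

lemma ci_exp (N : ℂ) (x : ℕ) : circleIntegral (fun z => 1 / z ^ (x + 1) * Complex.exp (N * z)) 0 1
    = 2 * Real.pi * Complex.I * (N ^ x / x.factorial) := by
  have := DifferentiableOn.circleIntegral_one_div_sub_center_pow_smul (c := 0)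
    (f := fun z => Complex.exp (N * z)) zero_lt_one x (by fun_prop)
  rw [iteratedDeriv_cexp_const_mul] at this
  simp only [sub_zero, smul_eq_mul, mul_zero, Complex.exp_zero] at this
  rw [this]; ring

lemma prod_pairs {k : ℕ} (F : Fin k → Fin k → ℂ) :
    ∏ p ∈ Finset.univ.filter (fun p : Fin k × Fin k => p.1 < p.2), F p.1 p.2 =
      ∏ i, ∏ j ∈ Ioi i, F i j := by
  rw [Finset.prod_filter, ← Finset.univ_product_univ, Finset.prod_product]
  refine Finset.prod_congr rfl fun i _ => ?_
  rw [← Finset.prod_filter]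
  exact Finset.prod_congr (by ext; simp) fun _ _ => rfl

lemma vand_sq {k : ℕ} (w : Fin k → ℂ) :
    (∏ p ∈ Finset.univ.filter (fun p : Fin k × Fin k => p.1 < p.2), (w p.1 - w p.2)) ^ 2 =
      (Matrix.vandermonde w).det ^ 2 := by
  rw [Matrix.det_vandermonde, ← prod_pairs (fun i j => w j - w i), ← Finset.prod_pow,
    ← Finset.prod_pow]
  exact Finset.prod_congr rfl fun _ _ => by ring

/-- One-variable factor. -/
lemma ci_factor {k nn : ℕ} (N : ℂ) (g : ℕ) (M : Fin nn → ℕ) (i t x : ℕ)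
    (hx : x + 1 + t + i = 2 * k + (g + ∑ j : Fin nn, ((j : ℕ) + 2) * M j)) :
    circleIntegral (fun z => Complex.exp (N * z) / z ^ (2 * k) * (1 / z) ^ g *
      (∏ j : Fin nn, (1 / z ^ ((j : ℕ) + 2)) ^ M j) * z ^ t * z ^ i) 0 1
    = 2 * Real.pi * Complex.I * (N ^ x / x.factorial) := by
  rw [← ci_exp]
  refine circleIntegral.integral_congr zero_le_one fun z hz => ?_
  have hz0 : z ≠ 0 := by rintro rfl; simp at hz
  have e : ∏ j : Fin nn, (1 / z ^ ((j : ℕ) + 2)) ^ M j =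
      1 / z ^ (∑ j : Fin nn, ((j : ℕ) + 2) * M j) := by
    rw [← Finset.prod_pow_eq_pow_sum, one_div, ← Finset.prod_inv_distrib]
    exact Finset.prod_congr rfl fun j _ => by rw [one_div, inv_pow, ← pow_mul]
  simp only [e]
  have e2 : z ^ (2 * k) * z ^ g * z ^ (∑ j : Fin nn, ((j : ℕ) + 2) * M j) =
      z ^ (x + 1) * z ^ t * z ^ i := by
    simp only [← pow_add]; congr 1; omega
  have : z ^ (∑ j : Fin nn, ((j : ℕ) + 2) * M j) = 
      z ^ (x + 1) * z ^ t * z ^ i / (z ^ (2 * k) * z ^ g) := by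
    rw [← e2]; field_simp
  rw [this, one_div_pow]
  field_simp

lemma det_fact {k : ℕ} (M : Fin k → ℕ) (N : ℂ) :
    ∑ τ : Equiv.Perm (Fin k), (Equiv.Perm.sign τ : ℂ) *
      ∏ i : Fin k, (N ^ (2 * k + M i - ((i : ℕ) + 1) - (τ i : ℕ)) /
        ((2 * k + M i - ((i : ℕ) + 1) - (τ i : ℕ)).factorial : ℂ)) =
    N ^ (k ^ 2 + ∑ i, M i) *
      (∏ i : Fin k, (1 : ℂ) / ((2 * k + M i - ((i : ℕ) + 1)).factorial : ℂ)) *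
      ∏ p ∈ Finset.univ.filter (fun p : Fin k × Fin k => p.1 < p.2),
        (((M p.2 : ℤ) - (M p.1 : ℤ) - ((p.2 : ℕ) : ℤ) + ((p.1 : ℕ) : ℤ) : ℤ) : ℂ) := by
  set a : Fin k → ℕ := fun i => 2 * k + M i - ((i : ℕ) + 1) with ha
  have hN : ∀ τ : Equiv.Perm (Fin k), ∏ i, N ^ (a i - (τ i : ℕ)) = N ^ (k ^ 2 + ∑ i, M i) := by
    intro τ
    rw [Finset.prod_pow_eq_pow_sum]
    congr 1
    have h1 : ∑ i, ((a i - (τ i : ℕ)) + (i : ℕ) + (τ i : ℕ) + 1) = ∑ i : Fin k, (2 * k + M i) := by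
      refine Finset.sum_congr rfl fun i _ => ?_
      have := i.2; have := (τ i).2
      simp only [ha]; omega
    simp only [Finset.sum_add_distrib] at h1
    rw [Equiv.sum_comp τ (fun i => (i : ℕ)), Fin.sum_univ_eq_sum_range (fun i => i)] at h1
    have h2 := Finset.sum_range_id_mul_two k
    have h3 : k * (k - 1) + k = k ^ 2 := by cases k <;> simp; ring
    simp only [Finset.sum_const, Finset.card_univ, Fintype.card_fin, smul_eq_mul] at h1
    nlinarith
  have hd := Matrix.det_eval_matrixOfPolynomials_eq_det_vandermonde (fun i => (a i : ℂ))
    (fun i : Fin k => descPochhammer ℂ i) (fun i => descPochhammer_natDegree ℂ i)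
    (fun i => monic_descPochhammer ℂ i)
  simp only [descPochhammer_eval_eq_descFactorial] at hd
  have hv : ∏ p ∈ Finset.univ.filter (fun p : Fin k × Fin k => p.1 < p.2),
        (((M p.2 : ℤ) - (M p.1 : ℤ) - ((p.2 : ℕ) : ℤ) + ((p.1 : ℕ) : ℤ) : ℤ) : ℂ) =
      (Matrix.vandermonde (fun i => (a i : ℂ))).det := by
    rw [Matrix.det_vandermonde, ← prod_pairs (fun i j => (a j : ℂ) - (a i : ℂ))]
    refine Finset.prod_congr rfl fun p _ => ?_
    have e : ∀ i : Fin k, (a i : ℂ) = 2 * k + M i - ((i : ℕ) + 1) := by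
      intro i
      have := i.2
      simp only [ha]
      rw [Nat.cast_sub (by omega)]; push_cast; ring
    rw [e, e]; push_cast; ring
  rw [hv, hd, ← Matrix.det_transpose, Matrix.det_apply', Finset.mul_sum]
  refine Finset.sum_congr rfl fun τ _ => ?_
  simp only [Matrix.transpose_apply, Matrix.of_apply]
  change _ * ∏ i, (N ^ (a i - (τ i : ℕ)) / ((a i - (τ i : ℕ)).factorial : ℂ)) = 
    _ * (∏ i, 1 / ((a i).factorial : ℂ)) * _
  rw [Finset.prod_div_distrib, hN, mul_assoc, ← mul_assoc (∏ i, 1 / ((a i).factorial : ℂ)),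
    mul_comm (∏ i, 1 / ((a i).factorial : ℂ)), mul_assoc, ← Finset.prod_mul_distrib, 
    ← mul_assoc, mul_comm (N ^ _), mul_assoc, div_eq_mul_inv, ← Finset.prod_inv_distrib]
  congr 2
  refine Finset.prod_congr rfl fun i _ => ?_
  have hle : (τ i : ℕ) ≤ a i := by
    have := i.2; have := (τ i).2
    simp only [ha]; omega
  have := Nat.factorial_mul_descFactorial hle
  rw [← this]
  have h1 : ((a i - (τ i : ℕ)).factorial : ℂ) ≠ 0 := by exact_mod_cast Nat.factorial_ne_zero _
  have h2 : ((a i).descFactorial (τ i : ℕ) : ℂ) ≠ 0 := by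
    exact_mod_cast (Nat.descFactorial_pos.2 hle).ne'
  push_cast
  field_simp

lemma triple_sum {α β γ : Type*} (S : Finset α) (T : Finset β) (U : Finset γ) (A : α → ℂ)
    (B : β → ℂ) (D : γ → ℂ) (E P : ℂ) :
    E * (∑ a ∈ S, A a) * (∑ b ∈ T, B b) * (∑ d ∈ U, D d) * P =
      ∑ a ∈ S, ∑ b ∈ T, ∑ d ∈ U, E * A a * B b * D d * P := by
  simp_rw [← Finset.sum_mul, ← Finset.mul_sum, ← Finset.sum_mul, ← Finset.mul_sum]
  simp_rw [← Finset.sum_mul, ← Finset.mul_sum]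

/-- **Proposition (the `k`-fold contour integral with `(Σ1/w_l − N)^{m₁}`).**
Here `n = nn + 1 ≥ 1` and the tuple `(m₁,…,mₙ)` is encoded by `m1 : ℕ` (for `m₁`) and
`mr : Fin nn → ℕ` (with `m_(j+2) = mr j`); `Δ²(w) = (∏_{i<j}(wᵢ−w_j))²`.  On the right,
`g : Fin (k+1) → ℕ` encodes `(m₁₀,m₁₁,…,m₁ₖ)` with `Σ g = m₁` and, for each `s = j+2`,
`Mm j : Fin k → ℕ` encodes `(m_{s1},…,m_{sk})` with sum `m_s`; the quantity
`Σ_{s=1}^n s·m_{si}` is `g i.succ + Σ_j (j+2)·Mm j i`, and `−j+i` (1-based) equals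
`−(p.2)+p.1` (0-based). -/
theorem contour_integral_prop_full (k nn : ℕ) (hk : 1 ≤ k) (m1 : ℕ) (mr : Fin nn → ℕ)
    (N : ℂ) :
    ((2 * (Real.pi : ℂ) * Complex.I) ^ k * (k.factorial : ℂ))⁻¹ *
        multiCircle k (fun w =>
          Complex.exp (N * ∑ i, w i) / (∏ i, w i ^ (2 * k)) *
            (∏ p ∈ Finset.univ.filter (fun p : Fin k × Fin k => p.1 < p.2),
              (w p.1 - w p.2)) ^ 2 *
            ((∑ l, 1 / w l) - N) ^ m1 *
            ∏ j : Fin nn, (∑ l, 1 / w l ^ ((j : ℕ) + 2)) ^ (mr j)) =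
      N ^ (k ^ 2 + m1 + ∑ j : Fin nn, ((j : ℕ) + 2) * mr j) *
        ∑ g ∈ (Fintype.piFinset fun _ : Fin (k + 1) => Finset.range (m1 + 1)).filter
            (fun g => ∑ i, g i = m1),
          ∑ Mm ∈ (Fintype.piFinset fun j : Fin nn => Fintype.piFinset fun _ : Fin k =>
                Finset.range (mr j + 1)).filter (fun Mm => ∀ j, ∑ i, Mm j i = mr j),
            (-1 : ℂ) ^ (g 0) * (Nat.multinomial Finset.univ g : ℂ) *
              (∏ j, (Nat.multinomial Finset.univ (Mm j) : ℂ)) *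
              (∏ i : Fin k, (1 : ℂ) /
                (((2 * k + (g i.succ + ∑ j : Fin nn, ((j : ℕ) + 2) * Mm j i)
                    - ((i : ℕ) + 1)).factorial : ℂ))) *
              ∏ p ∈ Finset.univ.filter (fun p : Fin k × Fin k => p.1 < p.2),
                ((((g p.2.succ + ∑ j : Fin nn, ((j : ℕ) + 2) * Mm j p.2 : ℕ) : ℤ)
                    - ((g p.1.succ + ∑ j : Fin nn, ((j : ℕ) + 2) * Mm j p.1 : ℕ) : ℤ)
                    - ((p.2 : ℕ) : ℤ) + ((p.1 : ℕ) : ℤ) : ℤ) : ℂ) := by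
  set Sg := (Fintype.piFinset fun _ : Fin (k + 1) => Finset.range (m1 + 1)).filter
            (fun g => ∑ i, g i = m1) with hSg
  set SM := (Fintype.piFinset fun j : Fin nn => Fintype.piFinset fun _ : Fin k =>
                Finset.range (mr j + 1)).filter (fun Mm => ∀ j, ∑ i, Mm j i = mr j) with hSM
  have hSg' : Finset.piAntidiag Finset.univ m1 = Sg := by
    ext g
    simp only [hSg, Finset.mem_piAntidiag, Finset.mem_filter, Fintype.mem_piFinset,
      Finset.mem_range, Finset.mem_univ, implies_true, and_true]
    refine ⟨fun h => ⟨fun i => ?_, h⟩, fun h => h.2⟩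
    have := Finset.single_le_sum (f := g) (fun _ _ => Nat.zero_le _) (Finset.mem_univ i)
    exact Nat.lt_succ_of_le (this.trans h.le)
  have hSM' : (Fintype.piFinset fun j : Fin nn => 
      Finset.piAntidiag (Finset.univ : Finset (Fin k)) (mr j)) = SM := by
    ext g
    simp only [hSM, Finset.mem_piAntidiag, Finset.mem_filter, Fintype.mem_piFinset,
      Finset.mem_range, Finset.mem_univ, implies_true, and_true]
    refine ⟨fun h => ⟨fun j i => ?_, h⟩, fun h => h.2⟩
    have := Finset.single_le_sum (f := g j) (fun _ _ => Nat.zero_le _) (Finset.mem_univ i)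
    exact Nat.lt_succ_of_le (this.trans (h j).le)
  let Φ : (Fin k → ℂ) → ℂ := fun w =>
    Complex.exp (N * ∑ i, w i) / (∏ i, w i ^ (2 * k)) * ((∑ l, 1 / w l) - N) ^ m1 *
            ∏ j : Fin nn, (∑ l, 1 / w l ^ ((j : ℕ) + 2)) ^ (mr j)
  let c : ((Fin (k + 1) → ℕ) × (Fin nn → Fin k → ℕ)) × Equiv.Perm (Fin k) → ℂ := fun a =>
    ((Nat.multinomial Finset.univ a.1.1 : ℂ) * (-N) ^ (a.1.1 0)) *
      (∏ j, (Nat.multinomial Finset.univ (a.1.2 j) : ℂ)) * (Equiv.Perm.sign a.2 : ℂ)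
  let f : ((Fin (k + 1) → ℕ) × (Fin nn → Fin k → ℕ)) × Equiv.Perm (Fin k) → Fin k → ℂ → ℂ :=
    fun a i z => Complex.exp (N * z) / z ^ (2 * k) * (1 / z) ^ (a.1.1 i.succ) *
      (∏ j : Fin nn, (1 / z ^ ((j : ℕ) + 2)) ^ a.1.2 j i) * z ^ (a.2 i : ℕ) * z ^ (i : ℕ)
  have hf : ∀ a i, ContinuousOn (f a i) (Metric.sphere 0 1) := by
    intro a i
    have h0 : ∀ z ∈ Metric.sphere (0 : ℂ) 1, z ≠ 0 := by
      rintro z hz rfl; simp at hz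
    have hinv : ∀ n : ℕ, ContinuousOn (fun z : ℂ => 1 / z ^ n) (Metric.sphere 0 1) := fun n =>
      continuousOn_const.div (by fun_prop) fun z hz => pow_ne_zero _ (h0 z hz)
    refine (((ContinuousOn.mul ?_ ?_).mul ?_).mul (by fun_prop)).mul (by fun_prop)
    · exact ContinuousOn.div (by fun_prop) (by fun_prop) fun z hz => pow_ne_zero _ (h0 z hz)
    · exact (continuousOn_const.div continuousOn_id h0).pow (a.1.1 i.succ)
    · exact continuousOn_finsetProd _ fun j _ => (hinv _).pow _
  have hΦ : ∀ (σ : Equiv.Perm (Fin k)) w, Φ (w ∘ σ) = Φ w := by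
    intro σ w
    simp only [Φ, Function.comp]
    rw [Equiv.sum_comp σ w, Equiv.prod_comp σ (fun i => w i ^ (2 * k)),
      Equiv.sum_comp σ (fun i => 1 / w i)]
    congr 1
    refine Finset.prod_congr rfl fun j _ => ?_
    rw [Equiv.sum_comp σ (fun i => 1 / w i ^ ((j : ℕ) + 2))]
  have hexp : ∀ w, Φ w * (Matrix.vandermonde w).det * ∏ i, w i ^ (i : ℕ) =
      ∑ a ∈ (Sg ×ˢ SM) ×ˢ Finset.univ, c a * ∏ i, f a i (w i) := by
    intro w
    have e1 : ((∑ l, 1 / w l) - N) ^ m1 = ∑ g ∈ Sg,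
        (Nat.multinomial Finset.univ g : ℂ) * ((-N) ^ (g 0) * ∏ i, (1 / w i) ^ g i.succ) := by
      have := Finset.sum_pow_eq_sum_piAntidiag Finset.univ
        (Fin.cons (-N) (fun i => 1 / w i) : Fin (k + 1) → ℂ) m1
      rw [hSg'] at this
      simp only [Fin.sum_univ_succ, Fin.prod_univ_succ, Fin.cons_zero, Fin.cons_succ] at this
      rw [← this]; ring
    have e2 : ∏ j : Fin nn, (∑ l, 1 / w l ^ ((j : ℕ) + 2)) ^ (mr j) = ∑ Mm ∈ SM,
        ∏ j, ((Nat.multinomial Finset.univ (Mm j) : ℂ) *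
          ∏ i, (1 / w i ^ ((j : ℕ) + 2)) ^ Mm j i) := by
      simp only [Finset.sum_pow_eq_sum_piAntidiag]
      rw [Finset.prod_univ_sum, hSM']
    have hdet := Matrix.det_apply' (Matrix.vandermonde w).transpose
    rw [Matrix.det_transpose] at hdet
    simp only [Φ]
    rw [e1, e2, hdet, triple_sum, Finset.sum_product, Finset.sum_product]
    refine Finset.sum_congr rfl fun g _ => ?_
    refine Finset.sum_congr rfl fun Mm _ => ?_
    refine Finset.sum_congr rfl fun τ _ => ?_
    simp only [c, f, Matrix.transpose_apply, Matrix.vandermonde_apply, Finset.prod_mul_distrib,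
      Finset.prod_div_distrib]
    rw [Finset.mul_sum, Complex.exp_sum,
      Finset.prod_comm (f := fun (j : Fin nn) (i : Fin k) => _)]
    ring
  have key := mc_symm ((Sg ×ˢ SM) ×ˢ Finset.univ) k c f hf Φ hΦ hexp
  have hint : (fun w : Fin k → ℂ =>
          Complex.exp (N * ∑ i, w i) / (∏ i, w i ^ (2 * k)) *
            (∏ p ∈ Finset.univ.filter (fun p : Fin k × Fin k => p.1 < p.2),
              (w p.1 - w p.2)) ^ 2 *
            ((∑ l, 1 / w l) - N) ^ m1 *
            ∏ j : Fin nn, (∑ l, 1 / w l ^ ((j : ℕ) + 2)) ^ (mr j)) =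
      fun w => Φ w * (Matrix.vandermonde w).det ^ 2 := by
    funext w
    rw [vand_sq]
    simp only [Φ]; ring
  rw [hint, key]
  have hfac : (k.factorial : ℂ) ≠ 0 := by exact_mod_cast Nat.factorial_ne_zero _
  have hpi : (2 * (Real.pi : ℂ) * Complex.I) ^ k ≠ 0 := pow_ne_zero _ Complex.two_pi_I_ne_zero
  rw [mul_inv, mul_assoc, inv_mul_cancel_left₀ hfac, inv_mul_eq_iff_eq_mul₀ hpi,
    Finset.sum_product, Finset.sum_product, Finset.mul_sum, Finset.mul_sum]
  refine Finset.sum_congr rfl fun g hg => ?_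
  rw [Finset.mul_sum, Finset.mul_sum]
  refine Finset.sum_congr rfl fun Mm hMm => ?_
  have hg' : ∑ i, g i = m1 := (Finset.mem_filter.1 hg).2
  have hMm' : ∀ j, ∑ i, Mm j i = mr j := (Finset.mem_filter.1 hMm).2
  let M : Fin k → ℕ := fun i => g i.succ + ∑ j : Fin nn, ((j : ℕ) + 2) * Mm j i
  have hsum : m1 + ∑ j : Fin nn, ((j : ℕ) + 2) * mr j = g 0 + ∑ i, M i := by
    simp only [M, Finset.sum_add_distrib]
    rw [Finset.sum_comm]
    simp only [← Finset.mul_sum, hMm']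
    rw [← hg', Fin.sum_univ_succ, add_assoc]
  have hI : ∀ (τ : Equiv.Perm (Fin k)) (i : Fin k), circleIntegral (f ((g, Mm), τ) i) 0 1 =
      2 * Real.pi * Complex.I * (N ^ (2 * k + M i - ((i : ℕ) + 1) - (τ i : ℕ)) /
        ((2 * k + M i - ((i : ℕ) + 1) - (τ i : ℕ)).factorial : ℂ)) := by
    intro τ i
    refine ci_factor N (g i.succ) (fun j => Mm j i) i (τ i) _ ?_
    have := i.2; have := (τ i).2
    change _ = 2 * k + M i
    omega
  have hdf := det_fact M N
  simp only [hI, Finset.prod_mul_distrib, Finset.prod_const, Finset.card_univ, Fintype.card_fin, c]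
  have hL : ∀ (A P : ℂ) (X Y : Equiv.Perm (Fin k) → ℂ),
      ∑ τ, A * X τ * (P * Y τ) = P * (A * ∑ τ, X τ * Y τ) := by
    intro A P X Y
    rw [Finset.mul_sum, Finset.mul_sum]
    exact Finset.sum_congr rfl fun _ _ => by ring
  rw [hL, hdf, add_assoc, hsum, neg_pow N]
  congr 1
  · simp only [mul_pow]
  simp only [M, pow_add]
  ring
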